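/- (Autocorrelation of the output of an LTI system.) Let h, u : ℤ → ℝ be sequences with ∑_{k∈ℤ} |h(k)| < ∞ and ∑_{k∈ℤ} |u(k)| < ∞, and let y(k) = ∑_{l∈ℤ} h(l)·u(k−l) be the output of the LTI system with impulse response h driven by u. Define the autocorrelation of a sequence a by r_{aa}(m) = ∑_{k∈ℤ} a(k)·a(k+m). Then for every m ∈ ℤ, r_{yy}(m) = ∑_{l∈ℤ} r_{uu}(m−l)·r_{hh}(l); i.e., the autocorrelation of the output is the convolution of the autocorrelation of the input with the autocorrelation of the impulse response. -/

import Mathlib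

/-!
Both sides are iterated forms of one absolutely convergent triple series. Multiplying out
`y k * y (k + m)`, the left side is the sum over `(k, a, b)` of
`h a * u (k - a) * (h b * u (k + m - b))`; multiplying out the product of autocorrelations, the
right side is the sum over `(l, j, i)` of `u j * u (j + (m - l)) * (h i * h (i + l))`. The bijection
`k = j + i`, `a = i`, `b = i + l` of `ℤ³` (`corrEquiv`) matches the terms. Absolute convergence
(`summable_triple`) follows by bounding one factor of `u` by a constant, which leaves the product of
three summable sequences in the independent variables `a`, `b`, `k - a`.
-/

/-- The change of variables `(l, j, i) ↦ (k, a, b) = (j + i, i, i + l)`, where `l`, `j`, `i` are the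
lag and the summation indices of the autocorrelations of `u` and `h`. -/
def corrEquiv : ℤ × ℤ × ℤ ≃ ℤ × ℤ × ℤ where
  toFun p := (p.2.1 + p.2.2, p.2.2, p.2.2 + p.1)
  invFun q := (q.2.2 - q.2.1, q.1 - q.2.1, q.2.1)
  left_inv p := by ext <;> simp
  right_inv q := by ext <;> simp

/-- The change of variables `(k, a, b) ↦ (a, b, k - a)`. -/
def shiftEquiv : ℤ × ℤ × ℤ ≃ ℤ × ℤ × ℤ where
  toFun p := (p.2.1, p.2.2, p.1 - p.2.1)
  invFun q := (q.2.2 + q.1, q.1, q.2.1)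
  left_inv p := by ext <;> simp
  right_inv q := by ext <;> simp

lemma abs_le_tsum_abs {u : ℤ → ℝ} (hu : Summable fun k => |u k|) (k : ℤ) :
    |u k| ≤ ∑' j, |u j| :=
  hu.le_tsum k fun _ _ => abs_nonneg _

lemma summable_abs_mul_comp {f u : ℤ → ℝ} (hf : Summable fun k => |f k|)
    (hu : Summable fun k => |u k|) (g : ℤ → ℤ) : Summable fun l => ‖f l * u (g l)‖ := by
  refine Summable.of_nonneg_of_le (fun _ => norm_nonneg _) (fun l => ?_)
    (hf.mul_right (∑' j, |u j|))
  rw [norm_mul, Real.norm_eq_abs, Real.norm_eq_abs]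
  exact mul_le_mul_of_nonneg_left (abs_le_tsum_abs hu _) (abs_nonneg _)

lemma summable_triple {h u : ℤ → ℝ} (hh : Summable fun k => |h k|)
    (hu : Summable fun k => |u k|) (m : ℤ) :
    Summable fun p : ℤ × ℤ × ℤ =>
      h p.2.1 * u (p.1 - p.2.1) * (h p.2.2 * u (p.1 + m - p.2.2)) := by
  have h3 : Summable fun q : ℤ × ℤ × ℤ => |h q.1| * (|h q.2.1| * |u q.2.2|) :=
    hh.mul_of_nonneg (hh.mul_of_nonneg hu (fun _ => abs_nonneg _) (fun _ => abs_nonneg _))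
      (fun _ => abs_nonneg _) (fun _ => by dsimp; positivity)
  refine Summable.of_norm_bounded
    (((shiftEquiv.summable_iff).2 h3).mul_right (∑' j, |u j|)) (fun p => ?_)
  have hb := abs_le_tsum_abs hu (p.1 + m - p.2.2)
  simp only [norm_mul, Real.norm_eq_abs, Function.comp, shiftEquiv, Equiv.coe_fn_mk]
  calc _ = |h p.2.1| * (|h p.2.2| * |u (p.1 - p.2.1)|) * |u (p.1 + m - p.2.2)| := by ring
    _ ≤ _ := mul_le_mul_of_nonneg_left hb (by positivity)

/-- Autocorrelation of the output of a discrete LTI system: the autocorrelation of the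
output is the convolution of the autocorrelation of the input with the autocorrelation
of the impulse response. -/
theorem output_autocorrelation (h u : ℤ → ℝ)
    (hh : Summable (fun k : ℤ => |h k|)) (hu : Summable (fun k : ℤ => |u k|))
    (y : ℤ → ℝ) (hy : ∀ k : ℤ, y k = ∑' l : ℤ, h l * u (k - l)) :
    ∀ m : ℤ, (∑' k : ℤ, y k * y (k + m)) =
      ∑' l : ℤ, (∑' k : ℤ, u k * u (k + (m - l))) * (∑' k : ℤ, h k * h (k + l)) := by
  intro m
  have hF := summable_triple hh hu m
  have key : ∀ p : ℤ × ℤ × ℤ,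
      h (corrEquiv p).2.1 * u ((corrEquiv p).1 - (corrEquiv p).2.1) *
        (h (corrEquiv p).2.2 * u ((corrEquiv p).1 + m - (corrEquiv p).2.2)) =
      u p.2.1 * u (p.2.1 + (m - p.1)) * (h p.2.2 * h (p.2.2 + p.1)) := by
    rintro ⟨l, j, i⟩
    simp only [corrEquiv, Equiv.coe_fn_mk]
    rw [show j + i - i = j by ring, show j + i + m - (i + l) = j + (m - l) by ring]
    ring
  have hG : Summable fun p : ℤ × ℤ × ℤ =>
      u p.2.1 * u (p.2.1 + (m - p.1)) * (h p.2.2 * h (p.2.2 + p.1)) :=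
    ((corrEquiv.summable_iff).2 hF).congr key
  calc ∑' k : ℤ, y k * y (k + m)
      = ∑' k : ℤ, ∑' q : ℤ × ℤ, h q.1 * u (k - q.1) * (h q.2 * u (k + m - q.2)) :=
        tsum_congr fun k => by
          rw [hy, hy]
          exact tsum_mul_tsum_of_summable_norm (summable_abs_mul_comp hh hu _)
            (summable_abs_mul_comp hh hu _)
    _ = ∑' p : ℤ × ℤ × ℤ, h p.2.1 * u (p.1 - p.2.1) * (h p.2.2 * u (p.1 + m - p.2.2)) :=
        hF.tsum_prod.symm
    _ = ∑' p : ℤ × ℤ × ℤ, u p.2.1 * u (p.2.1 + (m - p.1)) * (h p.2.2 * h (p.2.2 + p.1)) := by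
        rw [← corrEquiv.tsum_eq]
        exact tsum_congr key
    _ = ∑' l : ℤ, ∑' q : ℤ × ℤ, u q.1 * u (q.1 + (m - l)) * (h q.2 * h (q.2 + l)) :=
        hG.tsum_prod
    _ = _ := tsum_congr fun l =>
        (tsum_mul_tsum_of_summable_norm (summable_abs_mul_comp hu hu fun k => k + (m - l))
          (summable_abs_mul_comp hh hh fun k => k + l)).symm
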